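/- arXiv:1711.03281 — 2 statements merged into one kernel-verified Lean document; each statement's English description precedes it below -/
import Mathlib

section
/- The kernel −C_Ω is positive semidefinite on the exterior of Ω: for any finite collection of points z_1, …, z_n ∈ ℂ \ closure(Ω) and complex numbers c_1, …, c_n, the sum Σ_{j,k=1}^n c_j · conj(c_k) · (−C_Ω(z_j, z_k)) is a nonnegative real number. -/
open Complex MeasureTheory Filter Topology Bornology

/-- The double Cauchy transform `C_Ω(z,w) = −(1/π) ∫_Ω dA(ζ)/((ζ−z)(conj ζ − conj w))`. -/
noncomputable def doubleCauchy (Ω : Set ℂ) (z w : ℂ) : ℂ :=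
  -(1 / (Real.pi : ℂ)) *
    ∫ ζ in Ω, ((ζ - z) * ((starRingEnd ℂ) ζ - (starRingEnd ℂ) w))⁻¹

/-!
Since `1 / ((ζ - z) * (conj ζ - conj w))` is the pointwise inner product of the functions
`ζ ↦ (ζ - w)⁻¹` and `ζ ↦ (ζ - z)⁻¹`, the matrix `-C_Ω(z_j, z_k)` is, up to the factor `1 / π` and a
transposition, the Gram matrix of the Cauchy kernels `(ζ - z_j)⁻¹` in `L²(Ω)`. For `z_j`
outside the closure of `Ω` the kernel is bounded on `Ω`, hence square integrable, as `Ω` has finite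
area.
-/

section PosSemidef

open scoped ComplexOrder InnerProductSpace Matrix

theorem sum_sum_mul_star_mul_nonneg_of_posSemidef {R ι : Type*} [CommRing R] [PartialOrder R]
    [StarRing R] [Fintype ι] {A : Matrix ι ι R} (hA : A.PosSemidef) (c : ι → R) :
    0 ≤ ∑ i, ∑ j, c i * star (c j) * A i j := by
  have hquad : 0 ≤ star (star c) ⬝ᵥ A *ᵥ star c := hA.dotProduct_mulVec_nonneg (star c)
  simpa only [star_star, dotProduct, Matrix.mulVec, Finset.mul_sum, Pi.star_apply,
    mul_assoc, mul_comm (A _ _)] using hquad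

theorem posSemidef_integral_inner {𝕜 α E ι : Type*} [RCLike 𝕜] [MeasurableSpace α]
    [NormedAddCommGroup E] [InnerProductSpace 𝕜 E] [Finite ι] {μ : Measure α} {f : ι → α → E}
    (hf : ∀ i, MemLp (f i) 2 μ) :
    (Matrix.of fun i j ↦ ∫ x, ⟪f i x, f j x⟫_𝕜 ∂μ).PosSemidef := by
  have gram_eq : Matrix.gram 𝕜 (fun i ↦ (hf i).toLp (f i)) =
      Matrix.of fun i j ↦ ∫ x, ⟪f i x, f j x⟫_𝕜 ∂μ := by
    ext i j
    rw [Matrix.gram_apply, L2.inner_def, Matrix.of_apply]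
    apply integral_congr_ae
    filter_upwards [(hf i).coeFn_toLp, (hf j).coeFn_toLp] with x hi hj
    rw [hi, hj]
  exact gram_eq ▸ Matrix.posSemidef_gram 𝕜 _

theorem neg_doubleCauchy_eq_integral_inner (Ω : Set ℂ) (z w : ℂ) :
    -doubleCauchy Ω z w = (Real.pi : ℂ)⁻¹ * ∫ ζ in Ω, ⟪(ζ - w)⁻¹, (ζ - z)⁻¹⟫_ℂ := by
  simp only [doubleCauchy, RCLike.inner_apply, map_inv₀, map_sub, mul_inv, one_div, neg_mul,
    neg_neg]

theorem memLp_inv_sub_of_notMem_closure {𝕜 : Type*} [NormedField 𝕜] [MeasurableSpace 𝕜]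
    [BorelSpace 𝕜] [SecondCountableTopology 𝕜] {μ : Measure 𝕜} {s : Set 𝕜} {z : 𝕜}
    (p : ENNReal) (hs : μ s ≠ ⊤) (hz : z ∉ closure s) :
    MemLp (fun ζ ↦ (ζ - z)⁻¹) p (μ.restrict s) := by
  have : IsFiniteMeasure (μ.restrict s) := isFiniteMeasure_restrict.2 hs
  have hmeas : Measurable fun ζ : 𝕜 ↦ (ζ - z)⁻¹ := by fun_prop
  obtain ⟨r, hr, hball⟩ : ∃ r > 0, ∀ ζ ∈ s, r ≤ dist z ζ := by
    simpa only [Metric.mem_closure_iff, not_forall, not_exists, not_and, not_lt, exists_prop]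
      using hz
  have hbound : ∀ ζ ∈ s, ‖(ζ - z)⁻¹‖ ≤ r⁻¹ := fun ζ hζ ↦ by
    rw [norm_inv, ← dist_eq_norm, dist_comm]
    exact inv_anti₀ hr (hball ζ hζ)
  refine MemLp.of_bound hmeas.aestronglyMeasurable r⁻¹ ?_
  exact (ae_restrict_iff (measurableSet_le hmeas.norm measurable_const)).2 (ae_of_all μ hbound)

theorem neg_doubleCauchy_posSemidef_exterior_general {ι : Type*} [Finite ι] {Ω : Set ℂ} {z : ι → ℂ}
    (hz : ∀ j, MemLp (fun ζ ↦ (ζ - z j)⁻¹) 2 (volume.restrict Ω)) :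
    (Matrix.of fun j k ↦ -doubleCauchy Ω (z j) (z k)).PosSemidef := by
  have eq_smul_gram : (Matrix.of fun j k ↦ -doubleCauchy Ω (z j) (z k)) = (Real.pi : ℂ)⁻¹ •
      (Matrix.of fun j k ↦ ∫ ζ in Ω, ⟪(ζ - z j)⁻¹, (ζ - z k)⁻¹⟫_ℂ)ᵀ := by
    ext j k
    exact neg_doubleCauchy_eq_integral_inner Ω (z j) (z k)
  have inv_pi_nonneg : 0 ≤ (Real.pi : ℂ)⁻¹ := by exact_mod_cast inv_nonneg.2 Real.pi_nonneg
  rw [eq_smul_gram]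
  exact (posSemidef_integral_inner hz).transpose.smul inv_pi_nonneg

end PosSemidef

/-- The kernel `−C_Ω` is positive semidefinite on the exterior of `Ω`. -/
theorem neg_doubleCauchy_posSemidef_exterior
    (Ω : Set ℂ) (hΩopen : IsOpen Ω) (hΩbdd : Bornology.IsBounded Ω)
    (hΩconn : IsConnected Ω) (hΩsc : SimplyConnectedSpace Ω)
    (γ : ℝ → ℂ) (hγan : ∀ t, AnalyticAt ℝ γ t)
    (hγper : Function.Periodic γ (2 * Real.pi))
    (hγ' : ∀ t, deriv γ t ≠ 0)
    (hΓ : frontier Ω = Set.range γ)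
    (n : ℕ) (z : Fin n → ℂ) (hz : ∀ j, z j ∉ closure Ω) (c : Fin n → ℂ) :
    0 ≤ (∑ j : Fin n, ∑ k : Fin n,
        c j * (starRingEnd ℂ) (c k) * (-(doubleCauchy Ω (z j) (z k)))).re ∧
    (∑ j : Fin n, ∑ k : Fin n,
        c j * (starRingEnd ℂ) (c k) * (-(doubleCauchy Ω (z j) (z k)))).im = 0 := by
  have hA := neg_doubleCauchy_posSemidef_exterior_general fun j ↦
    memLp_inv_sub_of_notMem_closure 2 hΩbdd.measure_lt_top.ne (hz j)
  open scoped ComplexOrder in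
  exact (nonneg_iff.1 (sum_sum_mul_star_mul_nonneg_of_posSemidef hA c)).imp_right Eq.symm
end

section
/- Fix w ∈ ℂ \ closure(Ω). Then there exists a holomorphic function G on Ω such that G(z) = E_Ω(z,w)/(conj(z) − conj(w)) for all z ∈ Ω; that is, the function z ↦ E_Ω(z,w)/(conj(z) − conj(w)) is holomorphic on Ω. -/
open Complex MeasureTheory Filter Topology Bornology

/-- The exponential transform `E_Ω(z,w) = exp (C_Ω(z,w))`. -/
noncomputable def expTransform (Ω : Set ℂ) (z w : ℂ) : ℂ :=
  Complex.exp (doubleCauchy Ω z w)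

/-! Suppose that near `z₀ ∈ Ω` a `C¹` function `h` with compact support in `Ω` satisfies
`∂̄h(ζ) = 1 / (ζ̄ - w̄)`. By the Cauchy–Pompeiu formula `h` is the Cauchy transform of `∂̄h`, so
`C_Ω(·, w) - h` is the Cauchy transform of a density vanishing near `z₀`, hence holomorphic there.
Taking for `h` a cut-off of the branch of `log ((ζ̄ - w̄) / (z̄₀ - w̄))` vanishing at `z₀` makes
`exp h` a constant multiple of `ζ̄ - w̄` near `z₀`, which cancels the denominator.

For Cauchy–Pompeiu, pass to polar coordinates about `z`: the kernel `1 / (ζ - z)` absorbs the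
Jacobian and turns `∂̄h` into half the sum of the radial derivative of `h` and `i` times its
derivative in the unit tangential direction. The former integrates to `-2πh(z)` by compact support,
the latter to `0` by periodicity. -/

open scoped ComplexConjugate Real

section SmoothCutoff

variable {V F : Type*} [NormedAddCommGroup V] [NormedSpace ℝ V] [FiniteDimensional ℝ V]
  [NormedAddCommGroup F] [NormedSpace ℝ F]

theorem exists_contDiff_hasCompactSupport_eventuallyEq {n : ℕ∞} {f : V → F} {x : V} {U : Set V}
    (hf : ∀ᶠ y in 𝓝 x, ContDiffAt ℝ n f y) (hU : U ∈ 𝓝 x) :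
    ∃ g : V → F, ContDiff ℝ n g ∧ HasCompactSupport g ∧ tsupport g ⊆ U ∧ g =ᶠ[𝓝 x] f := by
  obtain ⟨ρ, hρ, hball⟩ := Metric.mem_nhds_iff.1 (inter_mem hU hf)
  let χ : ContDiffBump x := ⟨ρ / 3, ρ / 2, by linarith, by linarith⟩
  have hsupp : tsupport (fun y => χ y • f y) ⊆ tsupport χ := tsupport_smul_subset_left χ f
  have hχ : tsupport χ ⊆ Metric.ball x ρ := by
    rw [χ.tsupport_eq]
    exact Metric.closedBall_subset_ball (by simp only [χ]; linarith)
  refine ⟨fun y => χ y • f y, contDiff_iff_contDiffAt.2 fun y => ?_, χ.hasCompactSupport.smul_right,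
    fun y hy => (hball (hχ (hsupp hy))).1, ?_⟩
  · by_cases hy : y ∈ Metric.ball x ρ
    · exact χ.contDiffAt.smul (hball hy).2
    · exact contDiffAt_const.congr_of_eventuallyEq
        (notMem_tsupport_iff_eventuallyEq.1 fun h => hy (hχ (hsupp h)))
  · filter_upwards [χ.eventuallyEq_one] with y hy
    simp [hy]

end SmoothCutoff

section Dbar

variable {E : Type*} [NormedAddCommGroup E] [NormedSpace ℂ E]

/-- The Wirtinger derivative `∂h/∂ζ̄ = (∂h/∂x + i ∂h/∂y) / 2`, taken to be `0` at points where `h`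
is not real differentiable. -/
noncomputable def dbar (h : ℂ → E) (ζ : ℂ) : E :=
  (1 / 2 : ℂ) • (fderiv ℝ h ζ 1 + I • fderiv ℝ h ζ I)

theorem conj_smul_dbar (h : ℂ → E) (ζ u : ℂ) :
    conj u • dbar h ζ = (1 / 2 : ℂ) • (fderiv ℝ h ζ u + I • fderiv ℝ h ζ (u * I)) := by
  have fderiv_apply (v : ℂ) :
      fderiv ℝ h ζ v = (v.re : ℂ) • fderiv ℝ h ζ 1 + (v.im : ℂ) • fderiv ℝ h ζ I := by
    conv_lhs => rw [show v = v.re • (1 : ℂ) + v.im • I by simp]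
    rw [map_add, map_smul, map_smul, Complex.coe_smul, Complex.coe_smul]
  have conj_eq : conj u = u.re - u.im * I := by
    apply Complex.ext <;> simp
  rw [fderiv_apply u, fderiv_apply (u * I), mul_I_re, mul_I_im, conj_eq, dbar, ofReal_neg]
  match_scalars
  · ring
  · linear_combination (-(u.im : ℂ) / 2) * I_sq

theorem dbar_conj_comp {g : ℂ → ℂ} {ζ : ℂ} (hg : DifferentiableAt ℂ g ζ) :
    dbar (fun z => conj (g z)) ζ = conj (deriv g ζ) := by
  have h : HasFDerivAt (fun z => conj (g z)) ((conjCLE : ℂ →L[ℝ] ℂ).comp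
      ((ContinuousLinearMap.toSpanSingleton ℂ (deriv g ζ)).restrictScalars ℝ)) ζ :=
    conjCLE.hasFDerivAt.comp ζ (hg.hasDerivAt.hasFDerivAt.restrictScalars ℝ)
  rw [dbar, h.fderiv]
  simp only [ContinuousLinearMap.comp_apply, ContinuousLinearMap.coe_restrictScalars',
    ContinuousLinearMap.toSpanSingleton_apply, ContinuousLinearEquiv.coe_coe, conjCLE_apply,
    smul_eq_mul, one_mul, map_mul, conj_I]
  linear_combination (-conj (deriv g ζ) / 2) * I_sq

theorem dbar_eventuallyEq {h₁ h₂ : ℂ → E} {z : ℂ} (h : h₁ =ᶠ[𝓝 z] h₂) :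
    dbar h₁ =ᶠ[𝓝 z] dbar h₂ := by
  filter_upwards [h.fderiv (𝕜 := ℝ)] with ζ hζ
  simp only [dbar, hζ]

theorem continuous_dbar {h : ℂ → E} (hh : ContDiff ℝ 1 h) : Continuous (dbar h) := by
  have := hh.continuous_fderiv one_ne_zero
  unfold dbar
  fun_prop

theorem support_dbar_subset (h : ℂ → E) : Function.support (dbar h) ⊆ tsupport h := by
  refine fun ζ hζ => support_fderiv_subset ℝ fun h0 => hζ ?_
  simp [dbar, h0]

theorem hasCompactSupport_dbar {h : ℂ → E} (hc : HasCompactSupport h) :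
    HasCompactSupport (dbar h) :=
  hc.mono' (support_dbar_subset h)

theorem exists_dbar_eventuallyEq_conj_logDeriv {g : ℂ → ℂ} {z : ℂ} (hg : AnalyticAt ℂ g z)
    (hgz : g z ≠ 0) {U : Set ℂ} (hU : U ∈ 𝓝 z) :
    ∃ h : ℂ → ℂ, ContDiff ℝ 1 h ∧ HasCompactSupport h ∧ tsupport h ⊆ U ∧
      (dbar h =ᶠ[𝓝 z] fun ζ => conj (logDeriv g ζ)) ∧
      ∀ᶠ ζ in 𝓝 z, exp (h ζ) = conj (g ζ / g z) := by
  have hslit : ∀ᶠ ζ in 𝓝 z, g ζ / g z ∈ slitPlane :=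
    (hg.continuousAt.div_const (g z)).eventually_mem
      (isOpen_slitPlane.mem_nhds (by simp [div_self hgz]))
  have hlog : ∀ᶠ ζ in 𝓝 z, AnalyticAt ℂ (fun ξ => log (g ξ / g z)) ζ := by
    filter_upwards [hslit, hg.eventually_analyticAt] with ζ hζ hgζ
    exact hgζ.div_const.clog hζ
  have hsmooth : ∀ᶠ ζ in 𝓝 z, ContDiffAt ℝ (1 : ℕ∞) (fun ξ => conj (log (g ξ / g z))) ζ :=
    hlog.mono fun ζ hζ => conjCLE.contDiff.contDiffAt.comp ζ (hζ.contDiffAt.restrict_scalars ℝ)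
  obtain ⟨h, hh, hc, hsupp, heq⟩ := exists_contDiff_hasCompactSupport_eventuallyEq hsmooth hU
  refine ⟨h, hh, hc, hsupp, (dbar_eventuallyEq heq).trans ?_, ?_⟩
  · filter_upwards [hslit, hg.eventually_analyticAt, hlog] with ζ hζ hgζ hlogζ
    have hderiv := (hgζ.differentiableAt.hasDerivAt.div_const (g z)).clog hζ
    rw [dbar_conj_comp hlogζ.differentiableAt, hderiv.deriv, logDeriv_apply,
      div_div_div_cancel_right₀ hgz]
  · filter_upwards [heq, hslit] with ζ hζ hslitζ
    rw [hζ, exp_conj, exp_log (slitPlane_ne_zero hslitζ)]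

end Dbar

theorem locallyIntegrable_sub_inv (z : ℂ) : LocallyIntegrable fun ζ : ℂ => (ζ - z)⁻¹ := by
  have h0 : LocallyIntegrable fun ζ : ℂ => ζ⁻¹ :=
    locallyIntegrable_of_norm_le_rpow (C := 1) (α := 1) (by simp) (by simp)
      (by simp [Real.rpow_neg_one]) (by fun_prop)
  refine (locallyIntegrable_map_homeomorph (Homeomorph.subRight z)).1 ?_
  rwa [Homeomorph.coe_subRight, map_sub_right_eq_self]

theorem integrableOn_sub_inv {s : Set ℂ} (hs : volume s ≠ ⊤) (z : ℂ) :
    IntegrableOn (fun ζ : ℂ => (ζ - z)⁻¹) s := by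
  let B := Metric.closedBall z 1
  have hnear : IntegrableOn (B.indicator fun ζ : ℂ => ‖(ζ - z)⁻¹‖) s :=
    ((integrable_indicator_iff Metric.isClosed_closedBall.measurableSet).2
      ((locallyIntegrable_sub_inv z).integrableOn_isCompact
        (isCompact_closedBall z 1)).norm).integrableOn
  have hfar : IntegrableOn (fun _ : ℂ => (1 : ℝ)) s := integrableOn_const hs
  refine (hnear.add hfar).mono' (by fun_prop) (ae_of_all _ fun ζ => ?_)
  by_cases hζ : ζ ∈ B
  · simp [hζ]
  · have h1 : 1 ≤ ‖ζ - z‖ := by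
      rw [Metric.mem_closedBall, dist_eq_norm, not_le] at hζ
      exact hζ.le
    simpa [hζ] using inv_le_one_of_one_le₀ h1

section CauchyPompeiu

variable {V F : Type*} [NormedAddCommGroup V] [NormedSpace ℝ V] [NormedAddCommGroup F]
  [NormedSpace ℝ F] {E : Type*} [NormedAddCommGroup E] [NormedSpace ℂ E]

theorem integral_Ioi_fderiv_ray [CompleteSpace F] {h : V → F} (hh : ContDiff ℝ 1 h)
    (hc : HasCompactSupport h) (x : V) {v : V} (hv : v ≠ 0) :
    ∫ r in Set.Ioi (0 : ℝ), fderiv ℝ h (x + r • v) v = -h x := by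
  have hray (r : ℝ) : HasDerivAt (fun r : ℝ => x + r • v) v r := by
    simpa using ((hasDerivAt_id r).smul_const v).const_add x
  have hderiv (r : ℝ) : deriv (h ∘ fun r : ℝ => x + r • v) r = fderiv ℝ h (x + r • v) v :=
    ((hh.differentiable one_ne_zero _).hasFDerivAt.comp_hasDerivAt r (hray r)).deriv
  have hemb : IsClosedEmbedding fun r : ℝ => x + r • v :=
    (Homeomorph.addLeft x).isClosedEmbedding.comp (isClosedEmbedding_smul_left hv)
  simpa [hderiv] using (hc.comp_isClosedEmbedding hemb).integral_Ioi_deriv_eq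
    (hh.comp (by fun_prop)) 0

theorem integral_fderiv_circleMap_tangent [CompleteSpace F] {h : ℂ → F} (hh : ContDiff ℝ 1 h)
    (z : ℂ) {r : ℝ} (hr : r ≠ 0) :
    ∫ θ in -π..π, fderiv ℝ h (circleMap z r θ) (circleMap 0 1 θ * I) = 0 := by
  have hcont : Continuous fun θ => fderiv ℝ h (circleMap z r θ) (circleMap 0 1 θ * I) :=
    ((hh.continuous_fderiv one_ne_zero).comp (continuous_circleMap z r)).clm_apply
      ((continuous_circleMap 0 1).mul_const I)
  have hderiv (θ : ℝ) : HasDerivAt (fun θ => r⁻¹ • h (circleMap z r θ))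
      (fderiv ℝ h (circleMap z r θ) (circleMap 0 1 θ * I)) θ := by
    have htangent : circleMap 0 r θ * I = r • (circleMap 0 1 θ * I) := by
      simp [circleMap, mul_assoc]
    refine (((hh.differentiable one_ne_zero _).hasFDerivAt.comp_hasDerivAt θ
      (hasDerivAt_circleMap z r θ)).const_smul r⁻¹).congr_deriv ?_
    rw [htangent, map_smul, inv_smul_smul₀ hr]
  have hends : circleMap z r π = circleMap z r (-π) := by
    rw [← periodic_circleMap z r (-π)]
    ring_nf
  rw [intervalIntegral.integral_eq_sub_of_hasDerivAt (fun θ _ => hderiv θ)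
    (hcont.intervalIntegrable _ _), hends, sub_self]

theorem integrableOn_polarCoord_target_clm_apply {L : ℂ → ℂ →L[ℝ] F} (hL : Continuous L)
    (hc : HasCompactSupport L) {v : ℝ → ℂ} (hv : Continuous v) (z : ℂ) :
    IntegrableOn (fun p : ℝ × ℝ => L (circleMap z p.1 p.2) (v p.2)) polarCoord.target := by
  obtain ⟨R, hR⟩ := hc.isCompact.isBounded.subset_closedBall z
  have hcont : Continuous fun p : ℝ × ℝ => L (circleMap z p.1 p.2) (v p.2) := by
    unfold circleMap
    fun_prop
  refine (hcont.continuousOn.integrableOn_compact (K := Set.Icc 0 R ×ˢ Set.Icc (-π) π)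
    (isCompact_Icc.prod isCompact_Icc)).of_forall_sdiff_eq_zero
      polarCoord.open_target.measurableSet ?_
  rintro ⟨r, θ⟩ ⟨⟨hr : 0 < r, hθ⟩, hout⟩
  have hRr : R < r := not_le.1 fun hrR => hout ⟨⟨hr.le, hrR⟩, hθ.1.le, hθ.2.le⟩
  have hnot : circleMap z r θ ∉ tsupport L := fun hmem => by
    have hle : r ≤ R := by simpa [circleMap, abs_of_pos hr] using hR hmem
    exact hle.not_gt hRr
  simp [image_eq_zero_of_notMem_tsupport hnot]

theorem integral_polarCoord_target_fderiv_radial [CompleteSpace F] {h : ℂ → F}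
    (hh : ContDiff ℝ 1 h) (hc : HasCompactSupport h) (z : ℂ) :
    ∫ p in polarCoord.target, fderiv ℝ h (circleMap z p.1 p.2) (circleMap 0 1 p.2) =
      -(2 * π) • h z := by
  have hint := integrableOn_polarCoord_target_clm_apply (hh.continuous_fderiv one_ne_zero)
    (hc.fderiv ℝ) (continuous_circleMap 0 1) z
  have hray (θ : ℝ) :
      ∫ r in Set.Ioi (0 : ℝ), fderiv ℝ h (circleMap z r θ) (circleMap 0 1 θ) = -h z := by
    rw [← integral_Ioi_fderiv_ray hh hc z (circleMap_ne_center (c := 0) one_ne_zero (θ := θ))]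
    simp [circleMap]
  rw [IntegrableOn, polarCoord_target, Measure.volume_eq_prod, ← Measure.prod_restrict] at hint
  rw [polarCoord_target, Measure.volume_eq_prod, ← Measure.prod_restrict, integral_prod_symm _ hint]
  simp only [hray, setIntegral_const, Real.volume_real_Ioo_of_le (neg_le_self Real.pi_pos.le)]
  module

theorem integral_polarCoord_target_fderiv_tangential [CompleteSpace F] {h : ℂ → F}
    (hh : ContDiff ℝ 1 h) (hc : HasCompactSupport h) (z : ℂ) :
    ∫ p in polarCoord.target, fderiv ℝ h (circleMap z p.1 p.2) (circleMap 0 1 p.2 * I) = 0 := by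
  have hint := integrableOn_polarCoord_target_clm_apply (hh.continuous_fderiv one_ne_zero)
    (hc.fderiv ℝ) ((continuous_circleMap 0 1).mul_const I) z
  rw [polarCoord_target, Measure.volume_eq_prod] at hint ⊢
  rw [setIntegral_prod _ hint]
  refine setIntegral_eq_zero_of_forall_eq_zero fun r (hr : 0 < r) => ?_
  rw [← integral_Ioc_eq_integral_Ioo,
    ← intervalIntegral.integral_of_le (neg_le_self Real.pi_pos.le)]
  exact integral_fderiv_circleMap_tangent hh z hr.ne'

theorem integral_sub_inv_smul_dbar_eq_polar (h : ℂ → E) (z : ℂ) :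
    ∫ ζ, (ζ - z)⁻¹ • dbar h ζ = ∫ p in polarCoord.target, (1 / 2 : ℂ) •
      (fderiv ℝ h (circleMap z p.1 p.2) (circleMap 0 1 p.2) +
        I • fderiv ℝ h (circleMap z p.1 p.2) (circleMap 0 1 p.2 * I)) := by
  rw [← integral_add_left_eq_self _ z, ← Complex.integral_comp_polarCoord_symm]
  refine setIntegral_congr_fun polarCoord.open_target.measurableSet fun p hp => ?_
  have hr : (p.1 : ℂ) ≠ 0 := ofReal_ne_zero.2 (ne_of_gt hp.1)
  have hpolar : Complex.polarCoord.symm p = p.1 * circleMap 0 1 p.2 := by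
    simp [circleMap, exp_mul_I]
  have hpt : z + Complex.polarCoord.symm p = circleMap z p.1 p.2 := by
    simp [hpolar, circleMap]
  have hkernel : (p.1 : ℂ) * (Complex.polarCoord.symm p)⁻¹ = conj (circleMap 0 1 p.2) := by
    rw [hpolar, mul_inv, mul_inv_cancel_left₀ hr, circleMap_zero_inv, conj_circleMap_zero, inv_one]
  rw [add_sub_cancel_left, hpt, ← conj_smul_dbar, ← hkernel, mul_smul, Complex.coe_smul]

theorem integral_sub_inv_smul_dbar [CompleteSpace E] {h : ℂ → E} (hh : ContDiff ℝ 1 h)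
    (hc : HasCompactSupport h) (z : ℂ) : ∫ ζ, (ζ - z)⁻¹ • dbar h ζ = -(π : ℂ) • h z := by
  have hcont := hh.continuous_fderiv one_ne_zero
  have hradial := integrableOn_polarCoord_target_clm_apply hcont (hc.fderiv ℝ)
    (continuous_circleMap 0 1) z
  have htangential : IntegrableOn
      (fun p : ℝ × ℝ => I • fderiv ℝ h (circleMap z p.1 p.2) (circleMap 0 1 p.2 * I))
      polarCoord.target :=
    (integrableOn_polarCoord_target_clm_apply hcont (hc.fderiv ℝ)
      ((continuous_circleMap 0 1).mul_const I) z).smul I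
  rw [integral_sub_inv_smul_dbar_eq_polar, integral_smul, integral_add hradial htangential,
    integral_smul, integral_polarCoord_target_fderiv_radial hh hc,
    integral_polarCoord_target_fderiv_tangential hh hc, smul_zero, add_zero, ← Complex.coe_smul,
    smul_smul]
  push_cast
  ring_nf

end CauchyPompeiu

section CauchyTransform

variable {E : Type*} [NormedAddCommGroup E] [NormedSpace ℂ E] {μ : Measure ℂ} {φ ψ : ℂ → E}

/-- The Cauchy transform `z ↦ -π⁻¹ ∫ φ(ζ) / (ζ - z) dμ(ζ)` of the density `φ`, normalized so that
for Lebesgue measure it recovers a compactly supported `C¹` function from its `dbar`. -/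
noncomputable def cauchyTransform (μ : Measure ℂ) (φ : ℂ → E) (z : ℂ) : E :=
  -(1 / (π : ℂ)) • ∫ ζ, (ζ - z)⁻¹ • φ ζ ∂μ

theorem doubleCauchy_eq_cauchyTransform (Ω : Set ℂ) (z w : ℂ) :
    doubleCauchy Ω z w =
      cauchyTransform (volume.restrict Ω) (fun ζ => (conj ζ - conj w)⁻¹) z := by
  simp only [doubleCauchy, cauchyTransform, mul_inv, smul_eq_mul]

theorem cauchyTransform_dbar [CompleteSpace E] {h : ℂ → E} (hh : ContDiff ℝ 1 h)
    (hc : HasCompactSupport h) {Ω : Set ℂ} (hsupp : tsupport h ⊆ Ω) (z : ℂ) :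
    cauchyTransform (volume.restrict Ω) (dbar h) z = h z := by
  have hout : ∀ ζ ∉ Ω, (ζ - z)⁻¹ • dbar h ζ = 0 := fun ζ hζ => by
    rw [Function.notMem_support.1 fun hmem => hζ (hsupp (support_dbar_subset h hmem)), smul_zero]
  rw [cauchyTransform, setIntegral_eq_integral_of_forall_compl_eq_zero hout,
    integral_sub_inv_smul_dbar hh hc, smul_smul]
  simp [Real.pi_ne_zero]

theorem cauchyTransform_sub {z : ℂ} (hφ : Integrable (fun ζ => (ζ - z)⁻¹ • φ ζ) μ)
    (hψ : Integrable (fun ζ => (ζ - z)⁻¹ • ψ ζ) μ) :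
    cauchyTransform μ (φ - ψ) z = cauchyTransform μ φ z - cauchyTransform μ ψ z := by
  simp only [cauchyTransform, Pi.sub_apply, smul_sub, integral_sub hφ hψ]

theorem integrable_sub_inv_smul {z : ℂ} (hφ : Integrable φ μ) (hz : φ =ᶠ[𝓝 z] 0) :
    Integrable (fun ζ => (ζ - z)⁻¹ • φ ζ) μ := by
  obtain ⟨r, hr, hball⟩ := Metric.eventually_nhds_iff_ball.1 hz
  have hmeas : AEStronglyMeasurable (fun ζ : ℂ => (ζ - z)⁻¹) μ := by fun_prop
  refine (hφ.norm.const_mul r⁻¹).mono' (hmeas.smul hφ.1) (ae_of_all _ fun ζ => ?_)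
  by_cases hζ : ζ ∈ Metric.ball z r
  · simp [hball ζ hζ]
  · rw [Metric.mem_ball, dist_eq_norm, not_lt] at hζ
    rw [norm_smul, norm_inv]
    gcongr

theorem differentiableAt_cauchyTransform {z₀ : ℂ} (hφ : Integrable φ μ) (hz₀ : φ =ᶠ[𝓝 z₀] 0) :
    DifferentiableAt ℂ (cauchyTransform μ φ) z₀ := by
  obtain ⟨r, hr, hball⟩ := Metric.eventually_nhds_iff_ball.1 hz₀
  have hmeas (z : ℂ) : AEStronglyMeasurable (fun ζ : ℂ => (ζ - z)⁻¹) μ := by fun_prop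
  have hdist {ζ z : ℂ} (hζ : ζ ∉ Metric.ball z₀ r) (hz : z ∈ Metric.ball z₀ (r / 2)) :
      r / 2 ≤ ‖ζ - z‖ := by
    rw [Metric.mem_ball] at hζ hz
    rw [← dist_eq_norm]
    linarith [dist_triangle ζ z z₀]
  refine (hasDerivAt_integral_of_dominated_loc_of_deriv_le
    (F' := fun z ζ => ((ζ - z)⁻¹ ^ 2) • φ ζ) (bound := fun ζ => (r / 2)⁻¹ ^ 2 * ‖φ ζ‖)
    (Metric.ball_mem_nhds z₀ (half_pos hr)) (Eventually.of_forall fun z => (hmeas z).smul hφ.1)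
    (integrable_sub_inv_smul hφ hz₀) (((hmeas z₀).pow 2).smul hφ.1)
    (ae_of_all _ fun ζ z hz => ?_) (hφ.norm.const_mul _)
    (ae_of_all _ fun ζ z hz => ?_)).2.differentiableAt.const_smul _
  · by_cases hζ : ζ ∈ Metric.ball z₀ r
    · simp [hball ζ hζ]
    · rw [norm_smul, norm_pow, norm_inv]
      gcongr
      exact hdist hζ hz
  · by_cases hζ : ζ ∈ Metric.ball z₀ r
    · simpa [hball ζ hζ] using hasDerivAt_const z (0 : E)
    · have hne : ζ - z ≠ 0 := norm_pos_iff.1 ((half_pos hr).trans_le (hdist hζ hz))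
      simpa using (((hasDerivAt_id z).const_sub ζ).inv hne).smul_const (φ ζ)

theorem differentiableAt_cauchyTransform_sub [CompleteSpace E] {Ω : Set ℂ} {h : ℂ → E} {z₀ : ℂ}
    (hφ : IntegrableOn φ Ω) (hh : ContDiff ℝ 1 h) (hc : HasCompactSupport h)
    (hsupp : tsupport h ⊆ Ω) (heq : dbar h =ᶠ[𝓝 z₀] φ) :
    DifferentiableAt ℂ (fun z => cauchyTransform (volume.restrict Ω) φ z - h z) z₀ := by
  have hdbar_cont := continuous_dbar hh
  have hdbar_supp := hasCompactSupport_dbar hc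
  have hdiff : IntegrableOn (φ - dbar h) Ω :=
    hφ.sub (hdbar_cont.integrable_of_hasCompactSupport hdbar_supp).integrableOn
  have hzero : φ - dbar h =ᶠ[𝓝 z₀] 0 := heq.symm.sub_eq
  refine (differentiableAt_cauchyTransform hdiff hzero).congr_of_eventuallyEq ?_
  filter_upwards [hzero.eventuallyEq_nhds] with z hz
  have hkernel_dbar : IntegrableOn (fun ζ => (ζ - z)⁻¹ • dbar h ζ) Ω :=
    ((locallyIntegrable_sub_inv z).integrable_smul_right_of_hasCompactSupport hdbar_cont
      hdbar_supp).integrableOn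
  have hkernel : IntegrableOn (fun ζ => (ζ - z)⁻¹ • φ ζ) Ω := by
    refine ((integrable_sub_inv_smul hdiff hz).add hkernel_dbar).congr (ae_of_all _ fun ζ => ?_)
    simp [← smul_add]
  rw [cauchyTransform_sub hkernel hkernel_dbar, cauchyTransform_dbar hh hc hsupp]

end CauchyTransform

theorem interior_piece_G_holomorphic_general {Ω : Set ℂ} (hΩ : volume Ω ≠ ⊤) (w : ℂ) :
    DifferentiableOn ℂ (fun z => expTransform Ω z w / (conj z - conj w)) (interior Ω \ {w}) := by
  rintro z₀ ⟨hz₀, hne : z₀ ≠ w⟩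
  have hsub : AnalyticAt ℂ (fun ζ => ζ - w) z₀ := by fun_prop
  obtain ⟨h, hh, hc, hsupp, hdbar, hexp⟩ := exists_dbar_eventuallyEq_conj_logDeriv hsub
    (sub_ne_zero.2 hne) (mem_interior_iff_mem_nhds.1 hz₀)
  have hdens : IntegrableOn (fun ζ => (conj ζ - conj w)⁻¹) Ω :=
    (conjCLE.integrable_comp_iff.2 (integrableOn_sub_inv hΩ w)).congr (ae_of_all _ fun ζ => by simp)
  have hholo : DifferentiableAt ℂ (fun z => doubleCauchy Ω z w - h z) z₀ := by
    simp only [doubleCauchy_eq_cauchyTransform]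
    refine differentiableAt_cauchyTransform_sub hdens hh hc hsupp (hdbar.trans ?_)
    exact .of_forall fun ζ => by simp [logDeriv_apply]
  refine ((hholo.cexp.div_const (conj (z₀ - w))).congr_of_eventuallyEq
    ?_).differentiableWithinAt
  filter_upwards [hexp, eventually_ne_nhds hne] with z hz hzw
  have hconj₀ : conj (z₀ - w) ≠ 0 := (map_ne_zero _).2 (sub_ne_zero.2 hne)
  have hconj : conj (z - w) ≠ 0 := (map_ne_zero _).2 (sub_ne_zero.2 hzw)
  rw [expTransform, exp_sub, hz, map_div₀, ← map_sub]
  field_simp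

/-- For fixed `w` outside `closure Ω`, the function
`z ↦ E_Ω(z,w)/(conj z − conj w)` is holomorphic on `Ω`. -/
theorem interior_piece_G_holomorphic
    (Ω : Set ℂ) (hΩopen : IsOpen Ω) (hΩbdd : Bornology.IsBounded Ω)
    (hΩconn : IsConnected Ω) (hΩsc : SimplyConnectedSpace Ω)
    (γ : ℝ → ℂ) (hγan : ∀ t, AnalyticAt ℝ γ t)
    (hγper : Function.Periodic γ (2 * Real.pi))
    (hγ' : ∀ t, deriv γ t ≠ 0)
    (hΓ : frontier Ω = Set.range γ)
    (w : ℂ) (hw : w ∉ closure Ω) :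
    ∃ G : ℂ → ℂ, DifferentiableOn ℂ G Ω ∧
      ∀ z ∈ Ω, G z = expTransform Ω z w / ((starRingEnd ℂ) z - (starRingEnd ℂ) w) := by
  have hsub : Ω ⊆ interior Ω \ {w} := by
    rw [hΩopen.interior_eq]
    exact Set.subset_sdiff_singleton subset_rfl fun h => hw (subset_closure h)
  exact ⟨_, (interior_piece_G_holomorphic_general hΩbdd.measure_lt_top.ne w).mono hsub,
    fun _ _ => rfl⟩
end
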